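/- Let μ be an idempotent measure on a compact Hausdorff space X, and define its density d_μ: X → [-∞,0] by d_μ(x) = inf{μ(φ) : φ ∈ C(X), φ ≤ 0, φ(x) = 0}. Then d_μ is upper semicontinuous and sup_{x∈X} d_μ(x) = 0. -/

import Mathlib

open Topology

noncomputable section

def IsIdempotentMeasure {Z : Type*} [TopologicalSpace Z] (μ : C(Z, ℝ) → ℝ) : Prop :=
  μ 1 = 1 ∧ (∀ (c : ℝ) (φ : C(Z, ℝ)), μ (ContinuousMap.const Z c + φ) = c + μ φ) ∧
    ∀ φ ψ : C(Z, ℝ), μ (φ ⊔ ψ) = max (μ φ) (μ ψ)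

abbrev IM (Z : Type*) [TopologicalSpace Z] : Type _ :=
  {μ : C(Z, ℝ) → ℝ // IsIdempotentMeasure μ}

def density {Z : Type*} [TopologicalSpace Z] (μ : C(Z, ℝ) → ℝ) (z : Z) : EReal :=
  ⨅ φ : {φ : C(Z, ℝ) // φ ≤ 0 ∧ φ z = 0}, ((μ φ.1 : ℝ) : EReal)

def pushforward {X Y : Type*} [TopologicalSpace X] [TopologicalSpace Y]
    (f : C(X, Y)) (μ : C(X, ℝ) → ℝ) : C(Y, ℝ) → ℝ :=
  fun ψ => μ (ψ.comp f)

def mpComb {τ : Type*} (α : EReal) (a b : τ → ℝ) : τ → ℝ :=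
  fun t => ((α + (a t : EReal)) ⊔ ((b t : ℝ) : EReal)).toReal

def MaxPlusConvex {τ : Type*} (A : Set (τ → ℝ)) : Prop :=
  ∀ a ∈ A, ∀ b ∈ A, ∀ α : EReal, α ≤ 0 → mpComb α a b ∈ A

def projCM {T : Type*} (A : Set (T → ℝ)) (t : T) : C(A, ℝ) :=
  ⟨fun a => a.1 t, (continuous_apply t).comp continuous_subtype_val⟩

def tilde {Z : Type*} [TopologicalSpace Z] (φ : C(Z, ℝ)) : C(IM Z, ℝ) :=
  ⟨fun ν => ν.1 φ, (continuous_apply φ).comp continuous_subtype_val⟩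

theorem idem_mono {X : Type*} [TopologicalSpace X] {μ : C(X, ℝ) → ℝ}
    (hμ : IsIdempotentMeasure μ) {φ ψ : C(X, ℝ)} (h : φ ≤ ψ) : μ φ ≤ μ ψ := by
  have h1 := hμ.2.2 φ ψ
  rw [sup_eq_right.mpr h] at h1
  rw [h1]
  exact le_max_left _ _

theorem idem_const {X : Type*} [TopologicalSpace X] {μ : C(X, ℝ) → ℝ}
    (hμ : IsIdempotentMeasure μ) (c : ℝ) : μ (ContinuousMap.const X c) = c := by
  have h1 := hμ.2.1 (c - 1) 1
  have h2 : ContinuousMap.const X (c - 1) + 1 = ContinuousMap.const X c := by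
    ext x; simp
  rw [h2, hμ.1] at h1
  linarith

theorem density_usc_and_sup_zero {X : Type*} [TopologicalSpace X] [CompactSpace X]
    [T2Space X] (μ : C(X, ℝ) → ℝ) (hμ : IsIdempotentMeasure μ) :
    UpperSemicontinuous (density μ) ∧ (∀ x, density μ x ≤ 0) ∧
      (⨆ x : X, density μ x) = 0 := by
  have hle : ∀ x, density μ x ≤ 0 := by
    intro x
    have h0 : μ 0 = 0 := idem_const hμ 0
    refine (iInf_le _ (⟨0, le_refl _, rfl⟩ : {φ : C(X, ℝ) // φ ≤ 0 ∧ φ x = 0})).trans ?_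
    simp [h0]
  refine ⟨?_, hle, le_antisymm (iSup_le hle) ?_⟩
  · intro x y hy
    obtain ⟨⟨φ, hφ, hx⟩, hlt⟩ := iInf_lt_iff.mp hy
    have hc : ContinuousAt (fun x' => ((-φ x' + μ φ : ℝ) : EReal)) x :=
      (continuous_coe_real_ereal.comp (by fun_prop)).continuousAt
    have hev : ∀ᶠ x' in 𝓝 x, ((-φ x' + μ φ : ℝ) : EReal) < y :=
      hc.eventually_lt continuousAt_const (by simpa [hx] using hlt)
    filter_upwards [hev] with x' hx'
    refine lt_of_le_of_lt ?_ hx'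
    refine (iInf_le _ (⟨(ContinuousMap.const X (-φ x') + φ) ⊓ 0, inf_le_right, by simp⟩ :
      {φ : C(X, ℝ) // φ ≤ 0 ∧ φ x' = 0})).trans ?_
    rw [← hμ.2.1]
    exact EReal.coe_le_coe_iff.mpr (idem_mono hμ inf_le_left)
  · by_contra! hneg
    obtain ⟨c, hc, hcneg⟩ := EReal.lt_iff_exists_real_btwn.mp hneg
    have key : ∃ φ : C(X, ℝ), μ φ < c ∧ ∀ x ∈ (Set.univ : Set X), c ≤ φ x := by
      refine isCompact_univ.induction_on
        (p := fun s => ∃ φ : C(X, ℝ), μ φ < c ∧ ∀ x ∈ s, c ≤ φ x) ?_ ?_ ?_ ?_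
      · exact ⟨ContinuousMap.const X (c - 1), by rw [idem_const hμ]; linarith, by simp⟩
      · rintro s t hst ⟨φ, h1, h2⟩
        exact ⟨φ, h1, fun x hx => h2 x (hst hx)⟩
      · rintro s t ⟨φ, h1, h2⟩ ⟨ψ, h3, h4⟩
        refine ⟨φ ⊔ ψ, by rw [hμ.2.2]; exact max_lt h1 h3, ?_⟩
        rintro x (hx | hx)
        · exact (h2 x hx).trans (le_max_left _ _)
        · exact (h4 x hx).trans (le_max_right _ _)
      · intro x _
        obtain ⟨⟨φ, hφ, hx⟩, hlt⟩ := iInf_lt_iff.mp ((le_iSup (density μ) x).trans_lt hc)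
        have hc0 : c < φ x := by
          rw [hx]; exact_mod_cast hcneg
        refine ⟨{x' | c < φ x'}, mem_nhdsWithin_of_mem_nhds
          (φ.continuous.continuousAt.eventually (lt_mem_nhds hc0)), φ,
          EReal.coe_lt_coe_iff.mp hlt, fun x' hx' => le_of_lt hx'⟩
    obtain ⟨φ, h1, h2⟩ := key
    have h3 : ContinuousMap.const X c ≤ φ := fun x => h2 x trivial
    have h4 := idem_mono hμ h3
    rw [idem_const hμ] at h4
    linarith
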